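/- Let G be a finite group with a normal subgroup N, and let P be a Sylow p-subgroup of G acting fixed-point-freely on N (i.e., C_N(x) = 1 for every nontrivial x ∈ P). If χ is an irreducible complex character of G with N not contained in ker χ, then p does not divide cod(χ) = |G : ker χ| / χ(1). -/

import Mathlib

/-!
Let `d = χ(1)`, and let `H` be a subgroup each of whose nontrivial elements acts
fixed-point-freely on `N`.

Since `N` is not in the kernel of the irreducible representation `ρ`, it has no nonzero invariants,
so `∑ n ∈ N, ρ n = 0`. For `1 ≠ x ∈ H`, the commutator map `n ↦ n (x n x⁻¹)⁻¹` permutes `N`, so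
every element of the coset `N x` is conjugate to `x`; taking the trace of `(∑ n ∈ N, ρ n) ρ x = 0`
gives `|N| χ(x) = 0`. Thus `χ` vanishes on `H ∖ {1}`, and averaging `χ` over `H` shows `|H| ∣ d`.
As `d` divides `|G : ker χ|`, the number `|H| · cod χ` divides `d · cod χ = |G : ker χ|`, hence
`|G|`, so `cod χ ∣ |G : H|`. For a Sylow `p`-subgroup `H`, this index is prime to `p`.
-/

open Module Representation

section Irreducible

theorem nontrivial_of_isIrreducible {k G V : Type*} [Field k] [Monoid G] [AddCommGroup V]
    [Module k V] (ρ : Representation k G V) [IsIrreducible ρ] : Nontrivial V :=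
  not_subsingleton_iff_nontrivial.1 fun _ => bot_ne_top (α := Subrepresentation ρ) <|
    Subrepresentation.toSubmodule_injective (Subsingleton.elim _ _)

theorem isIrreducible_of_comp {k G H V : Type*} [Field k] [Monoid G] [Monoid H] [AddCommGroup V]
    [Module k V] (ρ : Representation k G V) (f : H →* G) [IsIrreducible (ρ.comp f)] :
    IsIrreducible ρ where
  exists_pair_ne :=
    ⟨⊥, ⊤, fun h => bot_ne_top (α := Subrepresentation (ρ.comp f)) <|
      Subrepresentation.toSubmodule_injective congr(($h).toSubmodule)⟩
  eq_bot_or_eq_top σ := by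
    let restricted : Subrepresentation (ρ.comp f) :=
      ⟨σ.toSubmodule, fun h _ hv => σ.apply_mem_toSubmodule (f h) hv⟩
    refine (eq_bot_or_eq_top restricted).imp ?_ ?_ <;>
      exact fun h => Subrepresentation.toSubmodule_injective congr(($h).toSubmodule)

open CategoryTheory in
theorem isIrreducible_of_simple {k G : Type*} [Field k] [Group G] (W : FDRep k G) [Simple W] :
    IsIrreducible W.ρ where
  exists_pair_ne := by
    refine ⟨⊥, ⊤, fun h => id_nonzero W ?_⟩
    have bot_eq_top : (⊥ : Submodule k W) = ⊤ := congr(($h).toSubmodule)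
    ext v
    exact (Submodule.mem_bot k).1 (bot_eq_top ▸ Submodule.mem_top)
  eq_bot_or_eq_top σ := by
    let ι : FDRep.of σ.toRepresentation ⟶ W :=
      FDRep.forget₂HomLinearEquiv _ _ (Rep.ofHom ⟨σ.toSubmodule.subtype, fun _ => rfl⟩)
    have : Mono ι := ConcreteCategory.mono_of_injective ι Subtype.val_injective
    by_cases hι : ι = 0
    · refine .inl (Subrepresentation.toSubmodule_injective ?_)
      exact (Submodule.eq_bot_iff _).2 fun v hv => congr(($hι).hom.hom.hom ⟨v, hv⟩)
    · refine .inr (Subrepresentation.toSubmodule_injective ?_)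
      have := isIso_of_mono_of_nonzero hι
      refine Submodule.eq_top_iff'.2 fun v => ?_
      obtain ⟨w, rfl⟩ := (FDRep.isoToLinearEquiv (asIso ι)).surjective v
      exact w.2

theorem exists_eq_algebraMap_of_forall_commute {k G V : Type*} [Field k] [IsAlgClosed k] [Monoid G]
    [AddCommGroup V] [Module k V] [FiniteDimensional k V] (ρ : Representation k G V)
    [IsIrreducible ρ] {f : End k V} (hf : ∀ g, Commute f (ρ g)) :
    ∃ c : k, f = algebraMap k (End k V) c := by
  obtain ⟨c, hc⟩ := IsIrreducible.algebraMap_intertwiningMap_bijective_of_isAlgClosed.surjective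
    (⟨f, hf⟩ : IntertwiningMap ρ ρ)
  exact ⟨c, congr(($hc).toLinearMap).symm⟩

end Irreducible

section Integrality

theorem dvd_of_isIntegral_of_natCast_eq_mul {k : Type*} [Field k] [CharZero k] {m d : ℕ} {c : k}
    (hd : d ≠ 0) (hc : IsIntegral ℤ c) (h : (m : k) = c * d) : d ∣ m := by
  have c_eq : c = algebraMap ℚ k (m / d) := by
    rw [map_div₀, map_natCast, map_natCast, h, mul_div_cancel_right₀ _ (Nat.cast_ne_zero.2 hd)]
  rw [c_eq, isIntegral_algebraMap_iff (algebraMap ℚ k).injective,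
    IsIntegrallyClosed.isIntegral_iff] at hc
  obtain ⟨z, hz⟩ := hc
  rw [eq_div_iff (Nat.cast_ne_zero.2 hd), eq_intCast] at hz
  have m_eq : (m : ℤ) = z * d := by exact_mod_cast hz.symm
  exact Int.natCast_dvd_natCast.1 (Dvd.intro_left z m_eq.symm)

theorem isIntegral_of_hasEigenvalue {R k V : Type*} [CommRing R] [Field k] [Algebra R k]
    [AddCommGroup V] [Module k V] [Module R V] [IsScalarTower R k V] {f : End k V} {μ : k}
    (hf : IsIntegral R f) (hμ : f.HasEigenvalue μ) : IsIntegral R μ := by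
  obtain ⟨q, q_monic, hq⟩ := hf
  have minpoly_dvd : minpoly k f ∣ q.map (algebraMap R k) :=
    minpoly.dvd k f (by rwa [Polynomial.aeval_map_algebraMap])
  have isRoot_μ := (End.isRoot_of_hasEigenvalue hμ).dvd minpoly_dvd
  exact ⟨q, q_monic, by rwa [Polynomial.IsRoot, Polynomial.eval_map] at isRoot_μ⟩

theorem isIntegral_trace_of_splits {R k V : Type*} [CommRing R] [Field k] [Algebra R k]
    [AddCommGroup V] [Module k V] [FiniteDimensional k V] [Module R V] [IsScalarTower R k V]
    {f : End k V} (hf : IsIntegral R f) (f_splits : f.charpoly.Splits) :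
    IsIntegral R (LinearMap.trace k V f) := by
  rw [End.trace_eq_sum_roots_charpoly_of_splits f_splits]
  refine IsIntegral.multiset_sum fun μ hμ => isIntegral_of_hasEigenvalue hf ?_
  exact (End.hasEigenvalue_iff_isRoot_charpoly f μ).2 (Polynomial.isRoot_of_mem_roots hμ)

theorem isIntegral_character {k G V : Type*} [Field k] [IsAlgClosed k] [Monoid G]
    [AddCommGroup V] [Module k V] [FiniteDimensional k V] (ρ : Representation k G V) {g : G}
    (hg : IsOfFinOrder g) : IsIntegral ℤ (ρ.character g) := by
  refine isIntegral_trace_of_splits (IsIntegral.of_pow hg.orderOf_pos ?_) (IsAlgClosed.splits _)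
  rw [← map_pow, pow_orderOf_eq_one, map_one]
  exact isIntegral_one

-- With `A` the integral closure of `R` in `k`, the sum is the image of an element of `A[G]`, and
-- `A[G]` is a finite `A`-module.
theorem isIntegral_sum_smul {R k G V : Type*} [CommRing R] [CommRing k] [Algebra R k] [Monoid G]
    [Fintype G] [AddCommGroup V] [Module k V] [Module R V] [IsScalarTower R k V]
    (ρ : Representation k G V) {a : G → k} (ha : ∀ g, IsIntegral R (a g)) :
    IsIntegral R (∑ g, a g • ρ g) := by
  let A := integralClosure R k
  let z : MonoidAlgebra A G := ∑ g, MonoidAlgebra.single g (⟨a g, ha g⟩ : A)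
  have lift_z : MonoidAlgebra.lift A (End k V) G ρ z = ∑ g, a g • ρ g := by
    simp only [z, map_sum, MonoidAlgebra.lift_single]
    rfl
  exact isIntegral_trans (A := A) _ (lift_z ▸ (IsIntegral.of_finite A z).map _)

end Integrality

section DegreeDivides

theorem commute_sum_smul {k G V : Type*} [CommRing k] [Group G] [Fintype G] [AddCommGroup V]
    [Module k V] (ρ : Representation k G V) {a : G → k} (ha : ∀ g h, a (h * g * h⁻¹) = a g)
    (h : G) : Commute (∑ g, a g • ρ g) (ρ h) := by
  unfold Commute SemiconjBy
  rw [Finset.mul_sum, Finset.sum_mul, ← Equiv.sum_comp (MulAut.conj h).toEquiv]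
  refine Finset.sum_congr rfl fun g _ => ?_
  simp [ha, ← map_mul]

variable {k G V : Type*} [Field k] [IsAlgClosed k] [CharZero k] [Group G] [AddCommGroup V]
  [Module k V] [FiniteDimensional k V]

theorem sum_character_inv_mul_character [Fintype G] (ρ : Representation k G V) [IsIrreducible ρ] :
    ∑ g, ρ.character g⁻¹ * ρ.character g = Nat.card G := by
  have card_ne_zero : (Nat.card G : k) ≠ 0 := NeZero.ne _
  have := invertibleOfNonzero card_ne_zero
  have orthonormal := char_orthonormal ρ ρ
  rw [if_pos ⟨.refl ρ⟩, inv_mul_eq_one₀ card_ne_zero] at orthonormal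
  simp_rw [orthonormal, mul_comm]

theorem finrank_dvd_card [Finite G] (ρ : Representation k G V) [IsIrreducible ρ] :
    finrank k V ∣ Nat.card G := by
  have := Fintype.ofFinite G
  have := nontrivial_of_isIrreducible ρ
  have character_inv_conj (g h : G) : ρ.character (h * g * h⁻¹)⁻¹ = ρ.character g⁻¹ := by
    rw [← char_conj ρ g⁻¹ h, conj_inv]
  obtain ⟨c, hc⟩ := exists_eq_algebraMap_of_forall_commute ρ
    (commute_sum_smul ρ (a := fun g => ρ.character g⁻¹) character_inv_conj)
  have c_integral : IsIntegral ℤ c := by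
    rw [← isIntegral_algebraMap_iff (algebraMap k (End k V)).injective, ← hc]
    exact isIntegral_sum_smul ρ fun g => isIntegral_character ρ (isOfFinOrder_of_finite g⁻¹)
  refine dvd_of_isIntegral_of_natCast_eq_mul finrank_pos.ne' c_integral ?_
  calc (Nat.card G : k)
      = LinearMap.trace k V (∑ g, ρ.character g⁻¹ • ρ g) := by
        rw [← sum_character_inv_mul_character ρ, map_sum]
        simp only [map_smul, smul_eq_mul, character]
    _ = c * finrank k V := by
        rw [hc, Algebra.algebraMap_eq_smul_one, map_smul, LinearMap.trace_one, smul_eq_mul]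

theorem finrank_dvd_index_ker [Finite G] (ρ : Representation k G V) [IsIrreducible ρ] :
    finrank k V ∣ (MonoidHom.ker ρ).index := by
  let faithful : Representation k (G ⧸ MonoidHom.ker ρ) V := QuotientGroup.lift _ ρ fun _ => id
  have : IsIrreducible (faithful.comp (QuotientGroup.mk' (MonoidHom.ker ρ))) :=
    inferInstanceAs (IsIrreducible ρ)
  have := isIrreducible_of_comp faithful (QuotientGroup.mk' (MonoidHom.ker ρ))
  exact finrank_dvd_card faithful

end DegreeDivides

section Averaging

theorem norm_eq_zero_of_invariants_eq_bot {k G V : Type*} [CommRing k] [Group G] [Fintype G]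
    [AddCommGroup V] [Module k V] (ρ : Representation k G V) (h : invariants ρ = ⊥) :
    ρ.norm = 0 := by
  ext v
  have norm_mem : ρ.norm v ∈ invariants ρ := fun g => self_norm_apply ρ g v
  rwa [h, Submodule.mem_bot] at norm_mem

variable {k G V : Type*} [Field k] [CharZero k] [Group G] [AddCommGroup V] [Module k V]
  [FiniteDimensional k V] (ρ : Representation k G V)

theorem sum_character_eq_card_mul_finrank_invariants [Fintype G] :
    ∑ g, ρ.character g = Nat.card G * finrank k (invariants ρ) := by
  have card_ne_zero : (Nat.card G : k) ≠ 0 := NeZero.ne _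
  have := invertibleOfNonzero card_ne_zero
  rw [← card_inv_mul_sum_char_eq_finrank, mul_inv_cancel_left₀ card_ne_zero]

theorem card_dvd_finrank_of_character_eq_zero [Finite G] (h : ∀ g ≠ 1, ρ.character g = 0) :
    Nat.card G ∣ finrank k V := by
  have := Fintype.ofFinite G
  have sum_eq := sum_character_eq_card_mul_finrank_invariants ρ
  rw [Fintype.sum_eq_single 1 h, char_one] at sum_eq
  exact Dvd.intro _ (by exact_mod_cast sum_eq.symm)

theorem eq_one_of_forall_character_eq_character_one [Finite G]
    (h : ∀ g, ρ.character g = ρ.character 1) : ρ = 1 := by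
  have := Fintype.ofFinite G
  have sum_eq := sum_character_eq_card_mul_finrank_invariants ρ
  simp only [h, char_one, Finset.sum_const, Finset.card_univ, Fintype.card_eq_nat_card,
    nsmul_eq_mul] at sum_eq
  have finrank_eq := Nat.cast_injective (mul_left_cancel₀ (NeZero.ne (Nat.card G : k)) sum_eq)
  have invariants_eq_top := Submodule.eq_top_of_finrank_eq finrank_eq.symm
  ext g v
  exact (invariants_eq_top ▸ Submodule.mem_top : v ∈ invariants ρ) g

theorem eq_ker_of_mem_iff_character_eq (K : Subgroup G) [Finite K]
    (hK : ∀ g, g ∈ K ↔ ρ.character g = ρ.character 1) : K = MonoidHom.ker ρ := by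
  refine le_antisymm (fun g hg => ?_) fun g hg => (hK g).2 ?_
  · have restrict_eq_one := eq_one_of_forall_character_eq_character_one (ρ.comp K.subtype)
      fun x => (hK x).1 x.2
    exact congr($restrict_eq_one ⟨g, hg⟩)
  · rw [character, character, MonoidHom.mem_ker.1 hg, map_one ρ]

end Averaging

section Vanishing

variable {k G V : Type*} [Field k] [Group G] [AddCommGroup V] [Module k V]
  (ρ : Representation k G V) (N : Subgroup G) [N.Normal]

theorem invariants_comp_subtype_eq_bot [IsIrreducible ρ] (hN : ¬ N ≤ MonoidHom.ker ρ) :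
    invariants (ρ.comp N.subtype) = ⊥ := by
  let invariantsN : Subrepresentation ρ := ⟨_, le_comap_invariants ρ N⟩
  rcases eq_bot_or_eq_top invariantsN with eq_bot | eq_top
  · exact congr(($eq_bot).toSubmodule)
  · refine absurd (fun n hn => LinearMap.ext fun v => ?_) hN
    have hv : v ∈ invariantsN := eq_top ▸ Submodule.mem_top
    exact hv ⟨n, hn⟩

theorem character_eq_zero_of_fixedPointFree [CharZero k] [Finite N]
    (hN : invariants (ρ.comp N.subtype) = ⊥) {x : G}
    (hx : MonoidHom.FixedPointFree (MulAut.conjNormal x : MulAut N)) : ρ.character x = 0 := by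
  have := Fintype.ofFinite N
  have commutator_conj (n : N) :
      ((MonoidHom.commutatorMap (MulAut.conjNormal x : MulAut N) n : N) : G) * x =
        n * x * (n : G)⁻¹ := by
    simp [div_eq_mul_inv, mul_assoc]
  have card_mul_eq_zero : (Nat.card N : k) * ρ.character x = 0 := calc
    (Nat.card N : k) * ρ.character x = ∑ n : N, ρ.character (n * x * (n : G)⁻¹) := by
      simp [char_conj]
    _ = ∑ n : N, ρ.character (n * x) := by
      simp_rw [← commutator_conj]
      exact Function.Bijective.sum_comp ⟨hx.commutatorMap_injective, hx.commutatorMap_surjective⟩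
        fun n : N => ρ.character (n * x)
    _ = LinearMap.trace k V (Representation.norm (ρ.comp N.subtype) * ρ x) := by
      simp [Representation.norm, character, Finset.sum_mul]
    _ = 0 := by rw [norm_eq_zero_of_invariants_eq_bot _ hN, zero_mul, map_zero]
  exact (mul_eq_zero.1 card_mul_eq_zero).resolve_left (NeZero.ne _)

end Vanishing

theorem stmt_5_general {k G V : Type*} [Field k] [IsAlgClosed k] [CharZero k] [Group G] [Finite G]
    [AddCommGroup V] [Module k V] [FiniteDimensional k V] (N : Subgroup G) [N.Normal]
    (H : Subgroup G) (hfpf : ∀ x ∈ H, x ≠ 1 → ∀ n ∈ N, x * n * x⁻¹ = n → n = 1)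
    (ρ : Representation k G V) [IsIrreducible ρ]
    (K : Subgroup G) (hK : ∀ g, g ∈ K ↔ ρ.character g = ρ.character 1) (hNK : ¬ N ≤ K) :
    K.index / finrank k V ∣ H.index := by
  obtain rfl := eq_ker_of_mem_iff_character_eq ρ K hK
  have card_dvd : Nat.card H ∣ finrank k V := by
    refine card_dvd_finrank_of_character_eq_zero (ρ.comp H.subtype) fun x hx => ?_
    refine character_eq_zero_of_fixedPointFree ρ N (invariants_comp_subtype_eq_bot ρ N hNK) ?_
    refine fun n hn => Subtype.ext (hfpf x x.2 (by simpa using hx) n n.2 ?_)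
    simpa using congr(($hn : G))
  refine Nat.dvd_of_mul_dvd_mul_left (Nat.card_pos (α := H)) ?_
  calc Nat.card H * ((MonoidHom.ker ρ).index / finrank k V)
      ∣ finrank k V * ((MonoidHom.ker ρ).index / finrank k V) := mul_dvd_mul_right card_dvd _
    _ = (MonoidHom.ker ρ).index := Nat.mul_div_cancel' (finrank_dvd_index_ker ρ)
    _ ∣ Nat.card G := Subgroup.index_dvd_card _
    _ = Nat.card H * H.index := H.card_mul_index.symm

/-- If a Sylow `p`-subgroup `P` of `G` acts (by conjugation) fixed-point-freely on a
normal subgroup `N`, and `χ` is an irreducible complex character of `G` whose kernel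
does not contain `N`, then `p` does not divide `cod χ = |G : ker χ| / χ(1)`. -/
theorem stmt_5 (G : Type) [Group G] [Fintype G] (p : ℕ) [Fact p.Prime]
    (N : Subgroup G) (hN : N.Normal) (P : Sylow p G)
    (hfpf : ∀ x : G, x ∈ P → x ≠ 1 → ∀ n ∈ N, x * n * x⁻¹ = n → n = 1)
    (W : FDRep ℂ G) (hW : CategoryTheory.Simple W)
    (K : Subgroup G) (hK : ∀ g : G, g ∈ K ↔ W.character g = W.character 1)
    (hNK : ¬ N ≤ K) :
    ¬ p ∣ K.index / Module.finrank ℂ W := by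
  have := isIrreducible_of_simple W
  exact fun hp => P.not_dvd_index (hp.trans (stmt_5_general N P hfpf W.ρ K hK hNK))
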